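/- arXiv:2307.15561 — 6 statements merged into one kernel-verified Lean document; each statement's English description precedes it below -/
import Mathlib

section
/- For all parameters α_w, α_n ∈ (0,1) with α_w < α_n, every number of parties n and every weight function w : {1,…,n} → ℝ≥0 with total weight W > 0, there exists a ticket assignment t : {1,…,n} → ℕ satisfying the Weight Restriction condition with parameters (α_w, α_n) whose total number of tickets T satisfies T ≤ ⌈(α_w(1 − α_w)/(α_n − α_w)) · n⌉. -/
/-!
Scale the weights by `s` and round `s * w i` to an integer `t i`, upwards when its fractional part
exceeds `1 - αw`. Raising `s` continuously and breaking ties one party at a time, every total number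
of tickets is reached. Each error `t i - s * w i` lies in `[αw - 1, αw]`, so every party, whether in
`S` or not, contributes at most `αw * (1 - αw)` to
`(t(S) - αw * T) - s * (w(S) - αw * W) = ∑ i, (1_S(i) - αw) * (t i - s * w i)`.
If `w(S) < αw * W`, this gives `t(S) < αw * T + αw * (1 - αw) * n`, which is at most `αn * T` as
soon as `αw * (1 - αw) * n ≤ (αn - αw) * T`.
-/

section Rounding

open Finset

variable {ι K : Type*} [Field K] [LinearOrder K]

/-- The ticket assignment `t` rounds the scaled weights `s * w i` with an error between `c - 1` and
`c`. Both bounds are allowed, so that a scaled weight with fractional part `1 - c` may be rounded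
either way; these ties are what allows the total number of tickets to be prescribed. -/
def IsRounding (c s : K) (w : ι → K) (t : ι → ℕ) : Prop :=
  ∀ i, s * w i + c - 1 ≤ t i ∧ (t i : K) ≤ s * w i + c

/-- The Weight Restriction condition with parameters `(αw, αn)`: every set of parties holding less
than the fraction `αw` of the weight holds less than the fraction `αn` of the tickets. -/
def WeightRestriction [Fintype ι] (αw αn : K) (w : ι → K) (t : ι → ℕ) : Prop :=
  ∀ S : Finset ι, ∑ i ∈ S, w i < αw * ∑ i, w i →
    ((∑ i ∈ S, t i : ℕ) : K) < αn * ((∑ i, t i : ℕ) : K)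

variable [IsStrictOrderedRing K] {c s : K} {w : ι → K} {t : ι → ℕ}

lemma isRounding_zero (hc₀ : 0 ≤ c) (hc₁ : c ≤ 1) : IsRounding c 0 w 0 := fun i ↦ by
  simpa using ⟨hc₁, hc₀⟩

namespace IsRounding

lemma scale_pos (h : IsRounding c s w t) (hc : c < 1) (hw : 0 ≤ w) (ht : t ≠ 0) : 0 < s := by
  contrapose! ht
  ext i
  have hti : (t i : K) < 1 := by
    linarith [(h i).2, mul_nonpos_of_nonpos_of_nonneg ht (hw i)]
  exact Nat.lt_one_iff.mp (by exact_mod_cast hti)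

lemma exists_add_single [Finite ι] [DecidableEq ι] (h : IsRounding c s w t) (hw : 0 < w) :
    ∃ i s', IsRounding c s' w (t + Pi.single i 1) := by
  obtain ⟨hw₀, k, hk⟩ := Pi.lt_def.mp hw
  -- The scale at which party `i` becomes entitled to its next ticket.
  let threshold (i : ι) : K := (t i + 1 - c) / w i
  obtain ⟨i, (hi : 0 < w i), hmin⟩ :=
    Set.exists_min_image {j | 0 < w j} threshold (Set.toFinite _) ⟨k, hk⟩
  have hi_eq : threshold i * w i = t i + 1 - c := div_mul_cancel₀ _ hi.ne'
  have hs : s ≤ threshold i := (le_div_iff₀ hi).mpr (by linarith [(h i).1])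
  refine ⟨i, threshold i, fun j ↦ ?_⟩
  obtain ⟨hj_lower, hj_upper⟩ := h j
  obtain rfl | hji := eq_or_ne j i
  · simp only [Pi.add_apply, Pi.single_eq_same, Nat.cast_add, Nat.cast_one]
    constructor <;> linarith
  simp only [Pi.add_apply, Pi.single_eq_of_ne hji, add_zero]
  refine ⟨?_, hj_upper.trans (by gcongr; exact hw₀ j)⟩
  obtain hj | hj := (hw₀ j).eq_or_lt
  · simpa only [← hj, Pi.zero_apply, mul_zero] using hj_lower
  · linarith [(le_div_iff₀ hj).mp (hmin j hj)]

variable [Fintype ι]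

lemma sum_sub_le (h : IsRounding c s w t) (hc₀ : 0 ≤ c) (hc₁ : c ≤ 1) (S : Finset ι) :
    ∑ i ∈ S, (t i : K) - c * ∑ i, (t i : K) ≤
      s * (∑ i ∈ S, w i - c * ∑ i, w i) + c * (1 - c) * Fintype.card ι := by
  classical
  have hpoint (i : ι) : ((if i ∈ S then 1 else 0) - c) * (t i - s * w i) ≤ c * (1 - c) := by
    obtain ⟨hlower, hupper⟩ := h i
    have hmem : (1 - c) * (t i - s * w i) ≤ (1 - c) * c :=
      mul_le_mul_of_nonneg_left (by linarith) (sub_nonneg.mpr hc₁)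
    have hnotMem : c * (s * w i - t i) ≤ c * (1 - c) :=
      mul_le_mul_of_nonneg_left (by linarith) hc₀
    split_ifs <;> linarith
  have hsum := sum_le_card_nsmul univ _ _ fun i _ ↦ hpoint i
  simp only [sub_mul, mul_sub, ite_mul, one_mul, zero_mul, sum_sub_distrib, sum_ite_mem,
    univ_inter, ← mul_sum, card_univ, nsmul_eq_mul] at hsum
  linarith

lemma weightRestriction {αn : K} (h : IsRounding c s w t) (hc₀ : 0 ≤ c) (hc₁ : c < 1)
    (hw : 0 ≤ w) (ht : t ≠ 0)
    (hcard : c * (1 - c) * Fintype.card ι ≤ (αn - c) * (∑ i, t i : ℕ)) :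
    WeightRestriction c αn w t := by
  intro S hS
  have hscaled : s * (∑ i ∈ S, w i - c * ∑ i, w i) < 0 :=
    mul_neg_of_pos_of_neg (h.scale_pos hc₁ hw ht) (sub_neg.mpr hS)
  have hgap := h.sum_sub_le hc₀ hc₁.le S
  push_cast at hcard ⊢
  linarith

end IsRounding

variable [Fintype ι]

lemma exists_isRounding_sum_eq (hc₀ : 0 ≤ c) (hc₁ : c ≤ 1) (hw : 0 < w) (T : ℕ) :
    ∃ s t, IsRounding c s w t ∧ ∑ i, t i = T := by
  classical
  induction T with
  | zero => exact ⟨0, 0, isRounding_zero hc₀ hc₁, by simp⟩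
  | succ T ih =>
    obtain ⟨s, t, h, rfl⟩ := ih
    obtain ⟨i, s', h'⟩ := h.exists_add_single hw
    exact ⟨s', _, h', by simp [sum_add_distrib]⟩

lemma exists_weightRestriction_sum_eq {αw αn : K} (hαw₀ : 0 ≤ αw) (hαw₁ : αw < 1) (hw : 0 < w)
    {T : ℕ} (hT₀ : T ≠ 0) (hT : αw * (1 - αw) * Fintype.card ι ≤ (αn - αw) * T) :
    ∃ t, WeightRestriction αw αn w t ∧ ∑ i, t i = T := by
  obtain ⟨s, t, h, rfl⟩ := exists_isRounding_sum_eq hαw₀ hαw₁.le hw T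
  have ht : t ≠ 0 := by
    rintro rfl
    simp at hT₀
  exact ⟨t, h.weightRestriction hαw₀ hαw₁ hw.le ht hT, rfl⟩

theorem weight_restriction_upper_bound_general [FloorRing K] {αw αn : K} (hαw₀ : 0 < αw)
    (hαw₁ : αw < 1) (hlt : αw < αn) (hw : ∀ i, 0 ≤ w i) (hW : 0 < ∑ i, w i) :
    ∃ t, WeightRestriction αw αn w t ∧
      ((∑ i, t i : ℕ) : ℤ) ≤ ⌈αw * (1 - αw) / (αn - αw) * Fintype.card ι⌉ := by
  have hgap : 0 < αn - αw := sub_pos.mpr hlt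
  have hw_pos : 0 < w := (Fintype.sum_pos_iff_of_nonneg hw).mp hW
  have : Nonempty ι := (Pi.lt_def.mp hw_pos).2.nonempty
  set B := αw * (1 - αw) / (αn - αw) * Fintype.card ι with hB
  have hB_pos : 0 < B :=
    mul_pos (div_pos (mul_pos hαw₀ (sub_pos.mpr hαw₁)) hgap) (mod_cast Fintype.card_pos)
  have hcard : αw * (1 - αw) * Fintype.card ι ≤ (αn - αw) * ⌈B⌉₊ :=
    calc αw * (1 - αw) * Fintype.card ι = (αn - αw) * B := by rw [hB]; field_simp
      _ ≤ (αn - αw) * ⌈B⌉₊ := by gcongr; exact Nat.le_ceil B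
  obtain ⟨t, ht, hT⟩ := exists_weightRestriction_sum_eq hαw₀.le hαw₁ hw_pos
    (Nat.ceil_pos.mpr hB_pos).ne' hcard
  exact ⟨t, ht, by rw [hT, Int.natCast_ceil_eq_ceil hB_pos.le]⟩

end Rounding

/-- **Weight Restriction upper bound.** For all `αw, αn ∈ (0,1)` with `αw < αn`,
every `n` and weights `w` with positive total weight, there is a ticket
assignment `t` satisfying the Weight Restriction condition with parameters
`(αw, αn)` whose total number of tickets is at most
`⌈(αw (1 - αw) / (αn - αw)) * n⌉`. -/
theorem weight_restriction_upper_bound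
    (αw αn : ℝ) (hαw0 : 0 < αw) (hαw1 : αw < 1)
    (hαn0 : 0 < αn) (hαn1 : αn < 1) (hlt : αw < αn)
    (n : ℕ) (w : Fin n → ℝ) (hw : ∀ i, 0 ≤ w i)
    (hW : 0 < ∑ i, w i) :
    ∃ t : Fin n → ℕ,
      (∀ S : Finset (Fin n),
          (∑ i ∈ S, w i) < αw * (∑ i, w i) →
          ((∑ i ∈ S, t i : ℕ) : ℝ) < αn * ((∑ i, t i : ℕ) : ℝ)) ∧
      ((∑ i, t i : ℕ) : ℤ) ≤ ⌈(αw * (1 - αw) / (αn - αw)) * n⌉ := by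
  obtain ⟨t, ht, hT⟩ := weight_restriction_upper_bound_general hαw0 hαw1 hlt hw hW
  exact ⟨t, ht, by simpa only [Fintype.card_fin] using hT⟩
end

section
/- For all parameters β_w, β_n ∈ (0,1) with β_n < β_w, every number of parties n and every weight function w : {1,…,n} → ℝ≥0 with total weight W > 0, there exists a ticket assignment t : {1,…,n} → ℕ satisfying the Weight Qualification condition with parameters (β_w, β_n) whose total number of tickets T satisfies T ≤ ⌈(β_w(1 − β_w)/(β_w − β_n)) · n⌉. -/
/-!
Scale the weights by a factor `s` and round `s * w i` up or down at the threshold `βw`. Since ties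
may be broken freely, every total `T` of tickets is attained. The rounding errors
`d i = t i - s * w i` lie in `[-βw, 1 - βw]`, so whether or not `i ∈ S`, the product
`(1_S i - βw) * d i` is at least `-βw * (1 - βw)`. Summed over all parties this says
`t(S) - βw * T ≥ s * (w(S) - βw * W) - βw * (1 - βw) * n`, so a set with `w(S) > βw * W` has more
than `βn * T` tickets as soon as `βw * (1 - βw) * n ≤ (βw - βn) * T`.
-/

/-- The Weight Qualification condition: every set of parties holding more than the fraction `βw`
of the total weight holds more than the fraction `βn` of the tickets. -/
def WeightQualification {ι 𝕜 : Type*} [Fintype ι] [Semiring 𝕜] [Preorder 𝕜]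
    (βw βn : 𝕜) (w : ι → 𝕜) (t : ι → ℕ) : Prop :=
  ∀ S : Finset ι, ∑ i ∈ S, w i > βw * ∑ i, w i →
    ((∑ i ∈ S, t i : ℕ) : 𝕜) > βn * ((∑ i, t i : ℕ) : 𝕜)

/-- The tickets `t` apportion the weights `w` by the stationary divisor method with threshold `β`
and multiplier `s`: each `t i` is `s * w i` rounded down if its fractional part is below `β` and up
if it is above `β`. At equality both roundings are allowed, which makes every total attainable. -/
def IsApportionment {ι 𝕜 : Type*} [Ring 𝕜] [Preorder 𝕜]
    (β : 𝕜) (w : ι → 𝕜) (s : 𝕜) (t : ι → ℕ) : Prop :=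
  ∀ i, (t i : 𝕜) - s * w i ∈ Set.Icc (-β) (1 - β)

section

variable {ι 𝕜 : Type*} [Fintype ι] [CommRing 𝕜] [LinearOrder 𝕜] [IsStrictOrderedRing 𝕜]
  {β : 𝕜} {w : ι → 𝕜}

theorem mul_sum_le_sum_add_card_mul_of_mem_Icc (hβ0 : 0 ≤ β) (hβ1 : β ≤ 1) {d : ι → 𝕜}
    (hd : ∀ i, d i ∈ Set.Icc (-β) (1 - β)) (S : Finset ι) :
    β * ∑ i, d i ≤ ∑ i ∈ S, d i + Fintype.card ι * (β * (1 - β)) := by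
  classical
  have pointwise (i : ι) : β * d i ≤ (if i ∈ S then d i else 0) + β * (1 - β) := by
    obtain ⟨lower, upper⟩ := hd i
    split_ifs
    · linarith [mul_le_mul_of_nonneg_left lower (sub_nonneg.2 hβ1)]
    · linarith [mul_le_mul_of_nonneg_left upper hβ0]
  calc β * ∑ i, d i = ∑ i, β * d i := Finset.mul_sum ..
    _ ≤ ∑ i, ((if i ∈ S then d i else 0) + β * (1 - β)) :=
        Finset.sum_le_sum fun i _ => pointwise i
    _ = ∑ i ∈ S, d i + Fintype.card ι * (β * (1 - β)) := by
        simp [Finset.sum_add_distrib]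

namespace IsApportionment

variable {s : 𝕜} {t : ι → ℕ}

theorem mul_sum_add_le (h : IsApportionment β w s t) (hβ0 : 0 ≤ β) (hβ1 : β ≤ 1)
    (S : Finset ι) :
    β * ((∑ i, t i : ℕ) : 𝕜) + s * (∑ i ∈ S, w i - β * ∑ i, w i) ≤
      ((∑ i ∈ S, t i : ℕ) : 𝕜) + Fintype.card ι * (β * (1 - β)) := by
  have error := mul_sum_le_sum_add_card_mul_of_mem_Icc hβ0 hβ1 h S
  simp only [Finset.sum_sub_distrib, ← Finset.mul_sum] at error
  push_cast
  linarith

theorem multiplier_pos (h : IsApportionment β w s t) (hβ : 0 < β) (hw : ∀ i, 0 ≤ w i)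
    (ht : 0 < ∑ i, t i) : 0 < s := by
  by_contra! hs
  refine ht.ne' (Finset.sum_eq_zero fun i _ => Nat.lt_one_iff.1 ?_)
  have lt_one : (t i : 𝕜) < 1 := by
    linarith [(h i).2, mul_nonpos_of_nonpos_of_nonneg hs (hw i)]
  exact_mod_cast lt_one

theorem weightQualification {βn : 𝕜} (h : IsApportionment β w s t)
    (hβ0 : 0 ≤ β) (hβ1 : β ≤ 1) (hs : 0 < s)
    (ht : β * (1 - β) * Fintype.card ι ≤ (β - βn) * ((∑ i, t i : ℕ) : 𝕜)) :
    WeightQualification β βn w t := by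
  intro S hS
  have gain : 0 < s * (∑ i ∈ S, w i - β * ∑ i, w i) := mul_pos hs (sub_pos.2 hS)
  linarith [h.mul_sum_add_le hβ0 hβ1 S]

end IsApportionment

end

section

variable {ι 𝕜 : Type*} [Field 𝕜] [LinearOrder 𝕜] [IsStrictOrderedRing 𝕜] {β : 𝕜} {w : ι → 𝕜}

/-- The next ticket goes to the party whose scaled weight is the first to reach its rounding
threshold as the multiplier grows. -/
theorem IsApportionment.exists_add_single [Finite ι] [DecidableEq ι] {s : 𝕜} {t : ι → ℕ}
    (h : IsApportionment β w s t) (hβ : 0 ≤ β) (hw : ∀ i, 0 ≤ w i) (hpos : ∃ i, 0 < w i) :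
    ∃ s' j, IsApportionment β w s' (t + Pi.single j 1) := by
  obtain ⟨j, (hj : 0 < w j), hmin⟩ :=
    Set.exists_min_image {i | 0 < w i} (fun i => (t i + β) / w i) (Set.toFinite _) hpos
  set s' := (t j + β) / w j
  have threshold_j : s' * w j = t j + β := div_mul_cancel₀ _ hj.ne'
  have le_threshold (i : ι) : s' * w i ≤ t i + β := by
    rcases (hw i).eq_or_lt with hi | hi
    · rw [← hi, mul_zero]
      positivity
    · exact (le_div_iff₀ hi).1 (hmin i hi)
  have s_le : s ≤ s' := (le_div_iff₀ hj).2 (by linarith [(h j).1])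
  refine ⟨s', j, fun i => ?_⟩
  rcases eq_or_ne i j with rfl | hij
  · simp [threshold_j]
  · have scaled_le : s * w i ≤ s' * w i := mul_le_mul_of_nonneg_right s_le (hw i)
    simp only [Pi.add_apply, Pi.single_eq_of_ne hij, add_zero]
    exact ⟨by linarith [le_threshold i], by linarith [(h i).2]⟩

theorem exists_isApportionment_sum_eq [Fintype ι] (hβ0 : 0 ≤ β) (hβ1 : β ≤ 1)
    (hw : ∀ i, 0 ≤ w i) (hpos : ∃ i, 0 < w i) (T : ℕ) :
    ∃ s t, IsApportionment β w s t ∧ ∑ i, t i = T := by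
  classical
  induction T with
  | zero => exact ⟨0, 0, fun i => by simp [hβ0, hβ1], by simp⟩
  | succ T ih =>
    obtain ⟨s, t, h, rfl⟩ := ih
    obtain ⟨s', j, h'⟩ := h.exists_add_single hβ0 hw hpos
    exact ⟨s', _, h', by simp [Finset.sum_add_distrib]⟩

theorem weight_qualification_upper_bound_general [Fintype ι] [FloorRing 𝕜] {βw βn : 𝕜}
    (hβw0 : 0 < βw) (hβw1 : βw < 1) (hlt : βn < βw) (hw : ∀ i, 0 ≤ w i) (hW : 0 < ∑ i, w i) :
    ∃ t : ι → ℕ, WeightQualification βw βn w t ∧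
      ((∑ i, t i : ℕ) : ℤ) = ⌈(βw * (1 - βw) / (βw - βn)) * Fintype.card ι⌉ := by
  have hpos : ∃ i, 0 < w i := by
    simpa using (Finset.sum_pos_iff_of_nonneg fun i _ => hw i).1 hW
  have : Nonempty ι := hpos.nonempty
  have hgap : 0 < βw - βn := sub_pos.2 hlt
  set bound := βw * (1 - βw) / (βw - βn) * Fintype.card ι with hbound
  have bound_pos : 0 < bound :=
    mul_pos (div_pos (mul_pos hβw0 (sub_pos.2 hβw1)) hgap) (Nat.cast_pos.2 Fintype.card_pos)
  obtain ⟨s, t, h, hsum⟩ :=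
    exists_isApportionment_sum_eq hβw0.le hβw1.le hw hpos ⌈bound⌉₊
  have hs : 0 < s := h.multiplier_pos hβw0 hw (hsum ▸ Nat.ceil_pos.2 bound_pos)
  refine ⟨t, h.weightQualification hβw0.le hβw1.le hs ?_, ?_⟩
  · calc βw * (1 - βw) * Fintype.card ι = (βw - βn) * bound := by rw [hbound]; field_simp
      _ ≤ (βw - βn) * ((∑ i, t i : ℕ) : 𝕜) := by
          rw [hsum]
          exact mul_le_mul_of_nonneg_left (Nat.le_ceil bound) hgap.le
  · rw [hsum, Int.natCast_ceil_eq_ceil bound_pos.le]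

end

/-- **Weight Qualification upper bound.** For all `βw, βn ∈ (0,1)` with
`βn < βw`, every `n` and weights `w` with positive total weight, there is a
ticket assignment `t` satisfying the Weight Qualification condition with
parameters `(βw, βn)` whose total number of tickets is at most
`⌈(βw (1 - βw) / (βw - βn)) * n⌉`. -/
theorem weight_qualification_upper_bound
    (βw βn : ℝ) (hβw0 : 0 < βw) (hβw1 : βw < 1)
    (hβn0 : 0 < βn) (hβn1 : βn < 1) (hlt : βn < βw)
    (n : ℕ) (w : Fin n → ℝ) (hw : ∀ i, 0 ≤ w i)
    (hW : 0 < ∑ i, w i) :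
    ∃ t : Fin n → ℕ,
      (∀ S : Finset (Fin n),
          (∑ i ∈ S, w i) > βw * (∑ i, w i) →
          ((∑ i ∈ S, t i : ℕ) : ℝ) > βn * ((∑ i, t i : ℕ) : ℝ)) ∧
      ((∑ i, t i : ℕ) : ℤ) ≤ ⌈(βw * (1 - βw) / (βw - βn)) * n⌉ := by
  obtain ⟨t, ht, hsum⟩ := weight_qualification_upper_bound_general hβw0 hβw1 hlt hw hW
  exact ⟨t, ht, by simpa only [Fintype.card_fin] using hsum.le⟩
end

section
/- Let α_w, α_n ∈ (0,1) with α_w < α_n, let w : {1,…,n} → ℝ≥0 be weights with total weight W > 0, let s > 0 be a real number, and let t : {1,…,n} → ℕ be a ticket assignment with total T such that w i·s + α_w − 1 ≤ t i ≤ w i·s + α_w for every i. If t violates the Weight Restriction condition with parameters (α_w, α_n), i.e., there exists a subset S ⊆ {1,…,n} with w(S) < α_w·W and t(S) ≥ α_n·T, then T < (α_w(1 − α_w)/(α_n − α_w)) · n. -/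
/-!
Write `t i = w i * s + d i` with rounding errors `d i ∈ [αw - 1, αw]`, and compare the excess
`x(S) - αw * x(univ)` of both sides. For `t` it is at least `(αn - αw) * T`, for `w` it is negative,
and for `d` it equals `(1 - αw) * d(S) - αw * d(Sᶜ)`, to which every index contributes at most
`αw * (1 - αw)`, whether it lies in `S` or not.
-/

section Excess

variable {ι K : Type*} [Fintype ι]

theorem sum_sub_mul_sum_le_mul_card
    [CommRing K] [LinearOrder K] [IsStrictOrderedRing K]
    {α : K} (hα0 : 0 ≤ α) (hα1 : α ≤ 1) {d : ι → K} (hd : ∀ i, d i ∈ Set.Icc (α - 1) α)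
    (S : Finset ι) :
    ∑ i ∈ S, d i - α * ∑ i, d i ≤ α * (1 - α) * Fintype.card ι := by
  classical
  have h_inside : ∑ i ∈ S, d i ≤ S.card * α := by
    simpa only [nsmul_eq_mul] using S.sum_le_card_nsmul d α fun i _ ↦ (hd i).2
  have h_outside : Sᶜ.card * (α - 1) ≤ ∑ i ∈ Sᶜ, d i := by
    simpa only [nsmul_eq_mul] using Sᶜ.card_nsmul_le_sum d (α - 1) fun i _ ↦ (hd i).1
  have h_card : (S.card : K) + Sᶜ.card = Fintype.card ι := mod_cast S.card_add_card_compl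
  calc ∑ i ∈ S, d i - α * ∑ i, d i
      = (1 - α) * ∑ i ∈ S, d i - α * ∑ i ∈ Sᶜ, d i := by
        rw [← Finset.sum_add_sum_compl S d]; ring
    _ ≤ (1 - α) * (S.card * α) - α * (Sᶜ.card * (α - 1)) :=
        sub_le_sub (mul_le_mul_of_nonneg_left h_inside (sub_nonneg.2 hα1))
          (mul_le_mul_of_nonneg_left h_outside hα0)
    _ = α * (1 - α) * Fintype.card ι := by rw [← h_card]; ring

theorem invalid_assignment_few_tickets_general
    [Field K] [LinearOrder K] [IsStrictOrderedRing K]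
    {αw αn : K} (hαw0 : 0 ≤ αw) (hαw1 : αw ≤ 1) (hlt : αw < αn)
    {w t : ι → K} {s : K} (hs : 0 < s)
    (ht : ∀ i, w i * s + αw - 1 ≤ t i ∧ t i ≤ w i * s + αw)
    {S : Finset ι} (hSw : ∑ i ∈ S, w i < αw * ∑ i, w i)
    (hSt : αn * ∑ i, t i ≤ ∑ i ∈ S, t i) :
    ∑ i, t i < αw * (1 - αw) / (αn - αw) * Fintype.card ι := by
  have h_error : ∀ i, t i - w i * s ∈ Set.Icc (αw - 1) αw := fun i ↦
    ⟨by linarith [(ht i).1], by linarith [(ht i).2]⟩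
  rw [div_mul_eq_mul_div, lt_div_iff₀ (sub_pos.2 hlt)]
  calc (∑ i, t i) * (αn - αw)
      ≤ ∑ i ∈ S, t i - αw * ∑ i, t i := by linarith
    _ = (∑ i ∈ S, w i - αw * ∑ i, w i) * s
          + (∑ i ∈ S, (t i - w i * s) - αw * ∑ i, (t i - w i * s)) := by
        simp only [Finset.sum_sub_distrib, ← Finset.sum_mul]; ring
    _ < ∑ i ∈ S, (t i - w i * s) - αw * ∑ i, (t i - w i * s) :=
        add_lt_of_neg_left _ (mul_neg_of_neg_of_pos (sub_neg.2 hSw) hs)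
    _ ≤ αw * (1 - αw) * Fintype.card ι := sum_sub_mul_sum_le_mul_card hαw0 hαw1 h_error S

end Excess

/-- If a ticket assignment of the form `w i · s + αw − 1 ≤ t i ≤ w i · s + αw`
violates the Weight Restriction condition with parameters `(αw, αn)`, then its
total number of tickets is less than `(αw (1 - αw)/(αn - αw)) * n`. -/
theorem invalid_assignment_few_tickets
    (αw αn : ℝ) (hαw0 : 0 < αw) (hαw1 : αw < 1)
    (hαn0 : 0 < αn) (hαn1 : αn < 1) (hlt : αw < αn)
    (n : ℕ) (w : Fin n → ℝ) (hw : ∀ i, 0 ≤ w i)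
    (hW : 0 < ∑ i, w i)
    (s : ℝ) (hs : 0 < s)
    (t : Fin n → ℕ)
    (ht : ∀ i, w i * s + αw - 1 ≤ (t i : ℝ) ∧ (t i : ℝ) ≤ w i * s + αw)
    (S : Finset (Fin n))
    (hSw : (∑ i ∈ S, w i) < αw * (∑ i, w i))
    (hSt : ((∑ i ∈ S, t i : ℕ) : ℝ) ≥ αn * ((∑ i, t i : ℕ) : ℝ)) :
    ((∑ i, t i : ℕ) : ℝ) < (αw * (1 - αw) / (αn - αw)) * n := by
  push_cast at hSt ⊢
  simpa only [Fintype.card_fin] using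
    invalid_assignment_few_tickets_general hαw0.le hαw1.le hlt hs ht hSw hSt
end

section
/- Let α_w, α_n ∈ (0,1) with α_w < α_n, let w : {1,…,n} → ℝ≥0 be weights with total weight W > 0, let s > 0 be a real number, and let t : {1,…,n} → ℕ be a ticket assignment with total T such that w i·s + α_w − 1 ≤ t i ≤ w i·s + α_w for every i. If there exists a subset S ⊆ {1,…,n} with w(S) < α_w·W and t(S) ≥ α_n·T, then s < (α_n(1 − α_w)·n)/((α_n − α_w)·W) − |S|/W, where |S| denotes the cardinality of S. -/
/-!
With exactly `w i * s` tickets per party, `S` would hold the same fraction of the tickets as of the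
weight, less than `αw`. So only rounding can lift its share to `αn`: each member of `S` gains at
most `αw` tickets and each other party loses at most `1 - αw`. Since `αn * t(Sᶜ) ≤ (1 - αn) * t(S)`,
these errors enter with the factors `1 - αn` and `αn`, and the identity
`(1 - αn) * αw = αn * (1 - αw) - (αn - αw)` turns their total into the bound.
-/

open Finset

section OrderedRing

variable {ι R : Type*}

theorem sum_mul_add_const [NonAssocSemiring R] (S : Finset ι) (w : ι → R) (s c : R) :
    ∑ i ∈ S, (w i * s + c) = (∑ i ∈ S, w i) * s + #S * c := by
  rw [sum_add_distrib, ← sum_mul, sum_const, nsmul_eq_mul]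

theorem mul_sum_compl_le_of_mul_sum_le_sum [Fintype ι] [DecidableEq ι] [Ring R] [PartialOrder R]
    [IsOrderedAddMonoid R] {S : Finset ι} {t : ι → R} {β : R}
    (hS : β * ∑ i, t i ≤ ∑ i ∈ S, t i) :
    β * ∑ i ∈ Sᶜ, t i ≤ (1 - β) * ∑ i ∈ S, t i := by
  rw [← sum_add_sum_compl S t, mul_add] at hS
  rw [sub_mul, one_mul]
  exact le_sub_iff_add_le'.mpr hS

theorem mul_sub_sum_le_of_mul_sum_le_sum [Fintype ι] [CommRing R] [PartialOrder R]
    [IsOrderedRing R] {S : Finset ι} {w t : ι → R} {s a b β : R} (hβ0 : 0 ≤ β) (hβ1 : β ≤ 1)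
    (hlower : ∀ i ∉ S, w i * s + a ≤ t i) (hupper : ∀ i ∈ S, t i ≤ w i * s + b)
    (hS : β * ∑ i, t i ≤ ∑ i ∈ S, t i) :
    s * (β * ∑ i, w i - ∑ i ∈ S, w i) ≤ (1 - β) * b * #S - β * a * (Fintype.card ι - #S) := by
  classical
  have hcompl : (∑ i ∈ Sᶜ, w i) * s + #Sᶜ * a ≤ ∑ i ∈ Sᶜ, t i :=
    sum_mul_add_const Sᶜ w s a ▸ sum_le_sum fun i hi ↦ hlower i (mem_compl.mp hi)
  have hself : ∑ i ∈ S, t i ≤ (∑ i ∈ S, w i) * s + #S * b :=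
    sum_mul_add_const S w s b ▸ sum_le_sum hupper
  have hbalance : β * ((∑ i ∈ Sᶜ, w i) * s + #Sᶜ * a) ≤
      (1 - β) * ((∑ i ∈ S, w i) * s + #S * b) :=
    calc β * ((∑ i ∈ Sᶜ, w i) * s + #Sᶜ * a)
      _ ≤ β * ∑ i ∈ Sᶜ, t i := mul_le_mul_of_nonneg_left hcompl hβ0
      _ ≤ (1 - β) * ∑ i ∈ S, t i := mul_sum_compl_le_of_mul_sum_le_sum hS
      _ ≤ (1 - β) * ((∑ i ∈ S, w i) * s + #S * b) :=
        mul_le_mul_of_nonneg_left hself (sub_nonneg.mpr hβ1)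
  rw [← sum_add_sum_compl S w, ← card_add_card_compl S, Nat.cast_add, ← sub_nonneg]
  convert sub_nonneg.mpr hbalance using 1
  ring

end OrderedRing

theorem invalid_assignment_scale_bound_general {ι K : Type*} [Fintype ι] [Field K] [LinearOrder K]
    [IsStrictOrderedRing K] {S : Finset ι} {w t : ι → K} {s αw αn : K}
    (hαn0 : 0 ≤ αn) (hαn1 : αn ≤ 1) (hlt : αw < αn) (hW : 0 < ∑ i, w i) (hs : 0 < s)
    (hlower : ∀ i ∉ S, w i * s + αw - 1 ≤ t i) (hupper : ∀ i ∈ S, t i ≤ w i * s + αw)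
    (hSw : ∑ i ∈ S, w i < αw * ∑ i, w i) (hSt : αn * ∑ i, t i ≤ ∑ i ∈ S, t i) :
    s < αn * (1 - αw) * Fintype.card ι / ((αn - αw) * ∑ i, w i) - #S / ∑ i, w i := by
  have hgap : 0 < αn - αw := sub_pos.mpr hlt
  have hscale : s * ((αn - αw) * ∑ i, w i) <
      αn * (1 - αw) * Fintype.card ι - (αn - αw) * #S :=
    calc s * ((αn - αw) * ∑ i, w i)
      _ = s * (αn * ∑ i, w i - αw * ∑ i, w i) := by rw [sub_mul]
      _ < s * (αn * ∑ i, w i - ∑ i ∈ S, w i) := by gcongr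
      _ ≤ (1 - αn) * αw * #S - αn * (αw - 1) * (Fintype.card ι - #S) :=
        mul_sub_sum_le_of_mul_sum_le_sum hαn0 hαn1
          (fun i hi ↦ (add_sub_assoc _ _ _).symm.trans_le (hlower i hi)) hupper hSt
      _ = αn * (1 - αw) * Fintype.card ι - (αn - αw) * #S := by ring
  rwa [← mul_div_mul_left (#S : K) _ hgap.ne', ← sub_div, lt_div_iff₀ (mul_pos hgap hW)]

/-- If a ticket assignment of the form `w i · s + αw − 1 ≤ t i ≤ w i · s + αw`
violates the Weight Restriction condition with parameters `(αw, αn)` at a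
subset `S`, then `s < (αn (1 - αw) n)/((αn - αw) W) - |S|/W`. -/
theorem invalid_assignment_scale_bound
    (αw αn : ℝ) (hαw0 : 0 < αw) (hαw1 : αw < 1)
    (hαn0 : 0 < αn) (hαn1 : αn < 1) (hlt : αw < αn)
    (n : ℕ) (w : Fin n → ℝ) (hw : ∀ i, 0 ≤ w i)
    (hW : 0 < ∑ i, w i)
    (s : ℝ) (hs : 0 < s)
    (t : Fin n → ℕ)
    (ht : ∀ i, w i * s + αw - 1 ≤ (t i : ℝ) ∧ (t i : ℝ) ≤ w i * s + αw)
    (S : Finset (Fin n))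
    (hSw : (∑ i ∈ S, w i) < αw * (∑ i, w i))
    (hSt : ((∑ i ∈ S, t i : ℕ) : ℝ) ≥ αn * ((∑ i, t i : ℕ) : ℝ)) :
    s < (αn * (1 - αw) * n) / ((αn - αw) * (∑ i, w i))
          - (S.card : ℝ) / (∑ i, w i) := by
  simpa only [Fintype.card_fin] using invalid_assignment_scale_bound_general
    hαn0.le hαn1.le hlt hW hs (fun i _ ↦ (ht i).1) (fun i _ ↦ (ht i).2) hSw (by exact_mod_cast hSt)
end

section
/- Let α, γ ∈ (0,1) with α < γ, let w : {1,…,n} → ℝ≥0 be weights with total weight W > 0, and let s > 0 be a real number. Define the ticket assignment t by t i = ⌊w i·s + γ⌋ for each i, with total T = Σ_i t i. If there exists a subset S₁ ⊆ {1,…,n} with w(S₁) < α·W and t(S₁) ≥ γ·T, then s < (γ(1 − γ)·n)/((γ − α)·W). -/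
/-!
The rounding error `e i = t i - w i * s` lies in `[γ - 1, γ]`. Weighted by `1 - γ` on `S₁` and by
`-γ` off `S₁`, each error contributes at most `γ * (1 - γ)`, so `e(S₁) - γ * e(univ)` is at most
`γ * (1 - γ) * n`. The same quantity equals `(t(S₁) - γ * T) + s * (γ * W - w(S₁))`, where the
first bracket is nonnegative and the second exceeds `(γ - α) * W`.
-/

section Rounding

variable {ι R : Type*} [Fintype ι] [CommRing R] [LinearOrder R] [IsStrictOrderedRing R]

theorem natFloor_mem_Icc [FloorSemiring R] {x : R} (hx : 0 ≤ x) :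
    (⌊x⌋₊ : R) ∈ Set.Icc (x - 1) x :=
  ⟨(Nat.sub_one_lt_floor x).le, Nat.floor_le hx⟩

theorem sum_sub_mul_sum_le_of_mem_Icc {γ : R} (hγ0 : 0 ≤ γ) (hγ1 : γ ≤ 1) {e : ι → R}
    (he : ∀ i, e i ∈ Set.Icc (γ - 1) γ) (S : Finset ι) :
    ∑ i ∈ S, e i - γ * ∑ i, e i ≤ γ * (1 - γ) * Fintype.card ι := by
  classical
  have sum_le : ∑ i ∈ S, e i ≤ S.card * γ := by
    simpa using S.sum_le_card_nsmul e γ fun i _ => (he i).2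
  have le_sum_compl : Sᶜ.card * (γ - 1) ≤ ∑ i ∈ Sᶜ, e i := by
    simpa using Sᶜ.card_nsmul_le_sum e (γ - 1) fun i _ => (he i).1
  have card_split : (S.card : R) + Sᶜ.card = Fintype.card ι :=
    mod_cast S.card_add_card_compl
  calc ∑ i ∈ S, e i - γ * ∑ i, e i
      = (1 - γ) * ∑ i ∈ S, e i - γ * ∑ i ∈ Sᶜ, e i := by
        rw [← Finset.sum_add_sum_compl S e]; ring
    _ ≤ (1 - γ) * (S.card * γ) - γ * (Sᶜ.card * (γ - 1)) := by
        have := sub_nonneg.2 hγ1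
        gcongr
    _ = γ * (1 - γ) * Fintype.card ι := by rw [← card_split]; ring

theorem light_set_many_tickets_scale_bound_general {α γ s : R} (hγ0 : 0 ≤ γ) (hγ1 : γ ≤ 1)
    (hs : 0 < s) {w t : ι → R} (ht : ∀ i, t i ∈ Set.Icc (w i * s + γ - 1) (w i * s + γ))
    {S : Finset ι} (hSw : ∑ i ∈ S, w i < α * ∑ i, w i) (hSt : γ * ∑ i, t i ≤ ∑ i ∈ S, t i) :
    s * ((γ - α) * ∑ i, w i) < γ * (1 - γ) * Fintype.card ι := by
  have error_mem (i : ι) : t i - w i * s ∈ Set.Icc (γ - 1) γ :=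
    ⟨by linarith [(ht i).1], by linarith [(ht i).2]⟩
  calc s * ((γ - α) * ∑ i, w i)
      = s * (γ * ∑ i, w i - α * ∑ i, w i) := by ring
    _ < s * (γ * ∑ i, w i - ∑ i ∈ S, w i) := by gcongr
    _ ≤ (∑ i ∈ S, t i - γ * ∑ i, t i) + s * (γ * ∑ i, w i - ∑ i ∈ S, w i) :=
        le_add_of_nonneg_left (sub_nonneg.2 hSt)
    _ = ∑ i ∈ S, (t i - w i * s) - γ * ∑ i, (t i - w i * s) := by
        simp only [Finset.sum_sub_distrib, ← Finset.sum_mul]; ring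
    _ ≤ γ * (1 - γ) * Fintype.card ι := sum_sub_mul_sum_le_of_mem_Icc hγ0 hγ1 error_mem S

end Rounding

/-- For the ticket assignment `t i = ⌊w i · s + γ⌋`: if some subset `S₁` with
`w(S₁) < α · W` gets at least `γ · T` tickets, then
`s < (γ (1 - γ) n) / ((γ - α) W)`. -/
theorem light_set_many_tickets_scale_bound
    (α γ : ℝ) (hα0 : 0 < α) (hα1 : α < 1)
    (hγ0 : 0 < γ) (hγ1 : γ < 1) (hlt : α < γ)
    (n : ℕ) (w : Fin n → ℝ) (hw : ∀ i, 0 ≤ w i)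
    (hW : 0 < ∑ i, w i)
    (s : ℝ) (hs : 0 < s)
    (t : Fin n → ℕ) (ht : ∀ i, t i = ⌊w i * s + γ⌋₊)
    (S₁ : Finset (Fin n))
    (hS₁w : (∑ i ∈ S₁, w i) < α * (∑ i, w i))
    (hS₁t : ((∑ i ∈ S₁, t i : ℕ) : ℝ) ≥ γ * ((∑ i, t i : ℕ) : ℝ)) :
    s < (γ * (1 - γ) * n) / ((γ - α) * (∑ i, w i)) := by
  have ht_mem (i : Fin n) : (t i : ℝ) ∈ Set.Icc (w i * s + γ - 1) (w i * s + γ) :=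
    ht i ▸ natFloor_mem_Icc (add_nonneg (mul_nonneg (hw i) hs.le) hγ0.le)
  rw [lt_div_iff₀ (mul_pos (sub_pos.2 hlt) hW)]
  simpa using light_set_many_tickets_scale_bound_general hγ0.le hγ1.le hs ht_mem hS₁w
    (mod_cast hS₁t)
end

section
/- Let β_w, β_n ∈ (0,1) with β_n < β_w, let w : {1,…,n} → ℝ≥0 be weights with total weight W > 0, let s > 0 be a real number, and let t : {1,…,n} → ℕ be a ticket assignment with total T such that w i·s + (1 − β_w) − 1 ≤ t i ≤ w i·s + (1 − β_w) for every i. If t violates the Weight Qualification condition with parameters (β_w, β_n), i.e., there exists a subset S ⊆ {1,…,n} with w(S) > β_w·W and t(S) ≤ β_n·T, then T < (β_w(1 − β_w)/(β_w − β_n)) · n. -/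
/-!
Measure a function `f` on a set `S` by its excess `f(S) - βw * f(univ)` over the share `βw` of the
total. This is linear in `f`. The weights have positive excess, and the rounding errors
`t i - w i * s` lie in `[-βw, 1 - βw]`, an interval chosen so that every index, inside `S` or
outside, lowers the excess by at most `βw * (1 - βw)`. Hence `t(S) > βw * T - βw * (1 - βw) * n`,
which together with `t(S) ≤ βn * T` bounds `T`.
-/

section

open Finset

variable {ι R : Type*} [Fintype ι]

lemma sum_sub_mul_sum_univ [DecidableEq ι] [CommRing R] (β : R) (S : Finset ι) (f : ι → R) :
    ∑ i ∈ S, f i - β * ∑ i, f i = (1 - β) * ∑ i ∈ S, f i - β * ∑ i ∈ Sᶜ, f i := by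
  rw [← sum_add_sum_compl S f]
  ring

lemma card_mul_sub_card_compl_mul_le_sum_sub_mul_sum_univ [DecidableEq ι] [CommRing R]
    [PartialOrder R] [IsOrderedRing R] {β a b : R} (hβ0 : 0 ≤ β) (hβ1 : β ≤ 1) {S : Finset ι}
    {f : ι → R} (ha : ∀ i ∈ S, a ≤ f i) (hb : ∀ i ∉ S, f i ≤ b) :
    (1 - β) * (#S * a) - β * (#Sᶜ * b) ≤ ∑ i ∈ S, f i - β * ∑ i, f i := by
  have lower : #S * a ≤ ∑ i ∈ S, f i := by
    simpa only [nsmul_eq_mul] using card_nsmul_le_sum S f a ha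
  have upper : ∑ i ∈ Sᶜ, f i ≤ #Sᶜ * b := by
    simpa only [nsmul_eq_mul] using sum_le_card_nsmul Sᶜ f b fun i hi ↦ hb i (mem_compl.1 hi)
  rw [sum_sub_mul_sum_univ]
  exact sub_le_sub (mul_le_mul_of_nonneg_left lower (sub_nonneg.2 hβ1))
    (mul_le_mul_of_nonneg_left upper hβ0)

lemma neg_mul_card_le_sum_sub_mul_sum_univ [CommRing R] [PartialOrder R] [IsOrderedRing R]
    {β : R} (hβ0 : 0 ≤ β) (hβ1 : β ≤ 1) {f : ι → R} (hf : ∀ i, f i ∈ Set.Icc (-β) (1 - β))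
    (S : Finset ι) :
    -(β * (1 - β) * Fintype.card ι) ≤ ∑ i ∈ S, f i - β * ∑ i, f i := by
  classical
  calc -(β * (1 - β) * Fintype.card ι)
      = (1 - β) * (#S * -β) - β * (#Sᶜ * (1 - β)) := by
        rw [← card_add_card_compl S, Nat.cast_add]
        ring
    _ ≤ ∑ i ∈ S, f i - β * ∑ i, f i :=
        card_mul_sub_card_compl_mul_le_sum_sub_mul_sum_univ hβ0 hβ1
          (fun i _ ↦ (hf i).1) fun i _ ↦ (hf i).2

lemma mul_sum_univ_sub_mul_card_lt_sum [CommRing R] [PartialOrder R] [IsStrictOrderedRing R]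
    {β s : R} (hβ0 : 0 ≤ β) (hβ1 : β ≤ 1) (hs : 0 < s) {w t : ι → R}
    (ht : ∀ i, t i - w i * s ∈ Set.Icc (-β) (1 - β)) {S : Finset ι}
    (hSw : β * ∑ i, w i < ∑ i ∈ S, w i) :
    β * ∑ i, t i - β * (1 - β) * Fintype.card ι < ∑ i ∈ S, t i := by
  have weight_excess : 0 < (∑ i ∈ S, w i - β * ∑ i, w i) * s := mul_pos (sub_pos.2 hSw) hs
  have error_excess := neg_mul_card_le_sum_sub_mul_sum_univ hβ0 hβ1 ht S
  have excess_eq : ∑ i ∈ S, t i - β * ∑ i, t i = (∑ i ∈ S, w i - β * ∑ i, w i) * s +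
      (∑ i ∈ S, (t i - w i * s) - β * ∑ i, (t i - w i * s)) := by
    simp only [sum_sub_distrib, ← sum_mul]
    ring
  have ticket_excess : -(β * (1 - β) * Fintype.card ι) < ∑ i ∈ S, t i - β * ∑ i, t i := by
    rw [excess_eq]
    exact lt_add_of_pos_of_le weight_excess error_excess
  rwa [lt_sub_iff_add_lt', ← sub_eq_add_neg] at ticket_excess

theorem invalid_wq_assignment_few_tickets_general [Field R] [LinearOrder R]
    [IsStrictOrderedRing R] {βw βn s : R} (hβw0 : 0 ≤ βw) (hβw1 : βw ≤ 1) (hlt : βn < βw)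
    (hs : 0 < s) {w t : ι → R} (ht : ∀ i, t i - w i * s ∈ Set.Icc (-βw) (1 - βw))
    {S : Finset ι} (hSw : βw * ∑ i, w i < ∑ i ∈ S, w i)
    (hSt : ∑ i ∈ S, t i ≤ βn * ∑ i, t i) :
    ∑ i, t i < βw * (1 - βw) / (βw - βn) * Fintype.card ι := by
  have lower := mul_sum_univ_sub_mul_card_lt_sum hβw0 hβw1 hs ht hSw
  rw [div_mul_eq_mul_div, lt_div_iff₀ (sub_pos.2 hlt)]
  linarith

end

/-- If a ticket assignment of the form
`w i · s + (1 - βw) − 1 ≤ t i ≤ w i · s + (1 - βw)` violates the Weight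
Qualification condition with parameters `(βw, βn)`, then its total number of
tickets is less than `(βw (1 - βw)/(βw - βn)) * n`. -/
theorem invalid_wq_assignment_few_tickets
    (βw βn : ℝ) (hβw0 : 0 < βw) (hβw1 : βw < 1)
    (hβn0 : 0 < βn) (hβn1 : βn < 1) (hlt : βn < βw)
    (n : ℕ) (w : Fin n → ℝ) (hw : ∀ i, 0 ≤ w i)
    (hW : 0 < ∑ i, w i)
    (s : ℝ) (hs : 0 < s)
    (t : Fin n → ℕ)
    (ht : ∀ i, w i * s + (1 - βw) - 1 ≤ (t i : ℝ) ∧ (t i : ℝ) ≤ w i * s + (1 - βw))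
    (S : Finset (Fin n))
    (hSw : (∑ i ∈ S, w i) > βw * (∑ i, w i))
    (hSt : ((∑ i ∈ S, t i : ℕ) : ℝ) ≤ βn * ((∑ i, t i : ℕ) : ℝ)) :
    ((∑ i, t i : ℕ) : ℝ) < (βw * (1 - βw) / (βw - βn)) * n := by
  have rounding_error : ∀ i, (t i : ℝ) - w i * s ∈ Set.Icc (-βw) (1 - βw) := fun i ↦
    ⟨by linarith [(ht i).1], by linarith [(ht i).2]⟩
  simpa using invalid_wq_assignment_few_tickets_general hβw0.le hβw1.le hlt hs rounding_error hSw
    (by exact_mod_cast hSt)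
end
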